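/- arXiv:2102.02405 — 2 statements merged into one kernel-verified Lean document; each statement's English description precedes it below -/
import Mathlib

section
/- If F' is a maximal isotropic flag in ℂ^{2l+1} whose m-th subspace equals span(e_1,…,e_m) for every 1 ≤ m ≤ l-1, then exactly one of the following holds: F' = F_+; F' = F_-; F' lies in the K-orbit of F_{l-1}. Moreover each of the three possibilities occurs. (This realizes set-theoretically that α_l is noncompact for the two closed K-orbits Q_± = K·F_± and that m(s_{α_l})*Q_+ = m(s_{α_l})*Q_- = K·F_{l-1}.) -/
open Module Submodule

noncomputable section

/-- `stdVec n m` is the `m`-th standard basis vector of `ℂ^n` (1-indexed); `0` out of range. -/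
def stdVec (n m : ℕ) : Fin n → ℂ :=
  if h : 1 ≤ m ∧ m ≤ n then Pi.single (⟨m - 1, by omega⟩ : Fin n) 1 else 0

/-- `stdSub n k` is the subspace `U_k = span(e_1, …, e_k)` of `ℂ^n`. -/
def stdSub (n k : ℕ) : Submodule ℂ (Fin n → ℂ) :=
  span ℂ (stdVec n '' Set.Icc 1 k)

/-- The action of an invertible linear map of `ℂ^n` on a chain of subspaces. -/
def actFlag (n : ℕ) (g : (Fin n → ℂ) ≃ₗ[ℂ] (Fin n → ℂ))
    (V : ℕ → Submodule ℂ (Fin n → ℂ)) (k : ℕ) : Submodule ℂ (Fin n → ℂ) :=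
  Submodule.map g.toLinearMap (V k)

/-- The orbit of the chain `V` under a set `B` of invertible linear maps. -/
def orbitOf (n : ℕ) (B : Set ((Fin n → ℂ) ≃ₗ[ℂ] (Fin n → ℂ)))
    (V : ℕ → Submodule ℂ (Fin n → ℂ)) : Set (ℕ → Submodule ℂ (Fin n → ℂ)) :=
  {V' | ∃ b ∈ B, actFlag n b V = V'}

/-- The symmetric bilinear form `β(x,y) = ∑_{k=1}^n x_k y_{n+1-k}` on `ℂ^n`. -/
def betaF (n : ℕ) (x y : Fin n → ℂ) : ℂ := ∑ k : Fin n, x k * y k.rev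

/-- `SO(n,ℂ)` for the form `β`. -/
def SOgrp (n : ℕ) : Set ((Fin n → ℂ) ≃ₗ[ℂ] (Fin n → ℂ)) :=
  {g | LinearMap.det g.toLinearMap = 1 ∧ ∀ x y, betaF n (g x) (g y) = betaF n x y}

/-- A maximal isotropic flag `V 1 ⊂ ⋯ ⊂ V l` in `ℂ^n` (values pinned outside `1..l`
so that two flags are equal iff they agree in degrees `1, …, l`). -/
def IsIsoFlag (n l : ℕ) (V : ℕ → Submodule ℂ (Fin n → ℂ)) : Prop :=
  (∀ i, i ≤ l → finrank ℂ ↥(V i) = i) ∧ (∀ i, V i ≤ V (i + 1)) ∧ (∀ i, l ≤ i → V i = V l) ∧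
    (∀ u ∈ V l, ∀ w ∈ V l, betaF n u w = 0)

/-- The isotropic flag `(v 1 ⊂ ⋯ ⊂ v l)` spanned by `v 1, …, v l`. -/
def isoFlagOf (n l : ℕ) (v : ℕ → Fin n → ℂ) (k : ℕ) : Submodule ℂ (Fin n → ℂ) :=
  span ℂ (v '' Set.Icc 1 (min k l))

/-- `K = {g ∈ SO(2l+1) : g e_0 = e_0}` (here `e_0 = e_{l+1}`), a copy of `SO(2l)`. -/
def Kodd (l : ℕ) : Set ((Fin (2 * l + 1) → ℂ) ≃ₗ[ℂ] (Fin (2 * l + 1) → ℂ)) :=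
  {g | g ∈ SOgrp (2 * l + 1) ∧
       g (stdVec (2 * l + 1) (l + 1)) = stdVec (2 * l + 1) (l + 1)}

/-- `V'` lies in the `K`-orbit of `V`. -/
def InKOddOrbit (l : ℕ) (V V' : ℕ → Submodule ℂ (Fin (2 * l + 1) → ℂ)) : Prop :=
  ∃ g ∈ Kodd l, actFlag (2 * l + 1) g V = V'

/-- The vector `e_l + √2 ı e_0 + e_{-l}` in `ℂ^{2l+1}`. -/
def wvec (l : ℕ) : Fin (2 * l + 1) → ℂ :=
  stdVec (2 * l + 1) l + ((Real.sqrt 2 : ℂ) * Complex.I) • stdVec (2 * l + 1) (l + 1) +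
    stdVec (2 * l + 1) (l + 2)

/-- Representatives of the `K`-orbits: for `i ≤ l - 1` this gives the flag `F_i`
`(e_1 ⊂ ⋯ ⊂ e_i ⊂ e_l + √2 ı e_0 + e_{-l} ⊂ e_{i+1} ⊂ ⋯ ⊂ e_{l-1})`, for `i = l` the
flag `F_+ = (e_1 ⊂ ⋯ ⊂ e_l)`, and for `i = l + 1` the flag
`F_- = (e_1 ⊂ ⋯ ⊂ e_{l-1} ⊂ e_{-l})`. -/
def repSOVec (l i m : ℕ) : Fin (2 * l + 1) → ℂ :=
  if i ≤ l - 1 then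
    (if m ≤ i then stdVec (2 * l + 1) m
     else if m = i + 1 then wvec l
     else stdVec (2 * l + 1) (m - 1))
  else if i = l then stdVec (2 * l + 1) m
  else if m ≤ l - 1 then stdVec (2 * l + 1) m else stdVec (2 * l + 1) (l + 2)

def repSOFlag (l i : ℕ) : ℕ → Submodule ℂ (Fin (2 * l + 1) → ℂ) :=
  isoFlagOf (2 * l + 1) l (repSOVec l i)

/-!
Write `U_k = ⟨e_1, …, e_k⟩`, so that `U_k^⊥ = U_{n-k}`. An isotropic `V_l ⊇ U_{l-1}` lies in
`U_{l-1}^⊥ = U_{l+2}`, hence is determined by the line `V_l / U_{l-1}` in the quadratic space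
`U_{l+2} / U_{l-1}`, which has basis `e_l, e_0, e_{-l}` and quadratic form `2ac + b²`: the flags in
question are the points `[a : b : c]` of a conic. Since `K` fixes `e_0`, it preserves the coordinate
`b = β(·, e_0)`. The locus `b = 0` consists of the two points `F_+ = [1 : 0 : 0]` and
`F_- = [0 : 0 : 1]`, while the torus `diag(u, 1, u⁻¹)` in `K` is transitive on the locus `b ≠ 0`.
-/

lemma mem_sup_span_singleton_iff {R M : Type*} [Ring R] [AddCommGroup M] [Module R M]
    {U : Submodule R M} {v x : M} : x ∈ U ⊔ span R {v} ↔ ∃ t : R, x - t • v ∈ U := by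
  simp only [mem_sup, mem_span_singleton]
  constructor
  · rintro ⟨y, hy, _, ⟨t, rfl⟩, rfl⟩
    exact ⟨t, by rwa [add_sub_cancel_right]⟩
  · rintro ⟨t, ht⟩
    exact ⟨_, ht, _, ⟨t, rfl⟩, sub_add_cancel _ _⟩

/-! ### Standard vectors and subspaces -/

lemma stdVec_apply {n m : ℕ} (hm : 1 ≤ m) (j : Fin n) :
    stdVec n m j = if (j : ℕ) + 1 = m then 1 else 0 := by
  unfold stdVec
  split_ifs with h hj hj
  · rw [Pi.single_apply, if_pos (Fin.ext (by simp only; omega))]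
  · exact Pi.single_eq_of_ne (fun h' => hj (by rw [h']; simp only; omega)) _
  · omega
  · rfl

lemma mem_stdSub {n k : ℕ} {x : Fin n → ℂ} :
    x ∈ stdSub n k ↔ ∀ j : Fin n, k ≤ j → x j = 0 := by
  constructor
  · intro hx j hj
    suffices stdSub n k ≤ LinearMap.ker (LinearMap.proj j) from this hx
    rw [stdSub, span_le]
    rintro _ ⟨m, ⟨hm, hmk⟩, rfl⟩
    simp only [SetLike.mem_coe, LinearMap.mem_ker, LinearMap.proj_apply, stdVec_apply hm]
    exact if_neg (by omega)
  · intro h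
    have hsum : x = ∑ j : Fin n, x j • stdVec n (j + 1) := by
      ext i
      simp [Finset.sum_apply, stdVec_apply, Fin.val_inj]
    rw [hsum]
    refine sum_mem fun j _ => ?_
    by_cases hj : k ≤ j
    · simp [h j hj]
    · exact smul_mem _ _ (subset_span ⟨j + 1, ⟨by omega, by omega⟩, rfl⟩)

lemma stdVec_mem_stdSub {n k m : ℕ} (hm : 1 ≤ m) (hmk : m ≤ k) : stdVec n m ∈ stdSub n k :=
  subset_span ⟨m, ⟨hm, hmk⟩, rfl⟩

lemma stdSub_mono (n : ℕ) : Monotone (stdSub n) := fun _ _ h =>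
  span_mono (Set.image_mono (Set.Icc_subset_Icc_right h))

lemma stdSub_zero (n : ℕ) : stdSub n 0 = ⊥ := by simp [stdSub]

lemma span_image_Icc_succ {R M : Type*} [Semiring R] [AddCommMonoid M] [Module R M]
    (v : ℕ → M) (k : ℕ) :
    span R (v '' Set.Icc 1 (k + 1)) = span R (v '' Set.Icc 1 k) ⊔ span R {v (k + 1)} := by
  rw [← Set.insert_Icc_right_eq_Icc_add_one (by omega), Set.image_insert_eq, span_insert, sup_comm]

lemma stdSub_succ (n k : ℕ) : stdSub n (k + 1) = stdSub n k ⊔ span ℂ {stdVec n (k + 1)} :=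
  span_image_Icc_succ _ _

lemma finrank_stdSub {n k : ℕ} (hk : k ≤ n) : finrank ℂ (stdSub n k) = k := by
  induction k with
  | zero => rw [stdSub_zero, finrank_bot]
  | succ k ih =>
    have hnotMem : stdVec n (k + 1) ∉ stdSub n k := fun h => by
      simpa [stdVec_apply] using mem_stdSub.1 h ⟨k, hk⟩ le_rfl
    rw [stdSub_succ, finrank_sup_span_singleton hnotMem, ih (by omega)]

/-! ### The bilinear form -/

section BetaF

variable {n : ℕ}

lemma betaF_add_left (x y z : Fin n → ℂ) : betaF n (x + y) z = betaF n x z + betaF n y z := by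
  simp [betaF, add_mul, Finset.sum_add_distrib]

lemma betaF_smul_left (t : ℂ) (x y : Fin n → ℂ) : betaF n (t • x) y = t * betaF n x y := by
  simp [betaF, Finset.mul_sum, mul_assoc]

lemma betaF_comm (x y : Fin n → ℂ) : betaF n x y = betaF n y x :=
  Fintype.sum_equiv Fin.revPerm _ _ fun k => by simp [mul_comm]

lemma betaF_add_right (x y z : Fin n → ℂ) : betaF n x (y + z) = betaF n x y + betaF n x z := by
  simp only [betaF_comm x, betaF_add_left]

lemma betaF_smul_right (t : ℂ) (x y : Fin n → ℂ) : betaF n x (t • y) = t * betaF n x y := by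
  simp only [betaF_comm x, betaF_smul_left]

lemma betaF_stdVec_right (x : Fin n → ℂ) (j : Fin n) :
    betaF n x (stdVec n (n - j)) = x j := by
  rw [betaF, Finset.sum_eq_single j _ (by simp)]
  · rw [stdVec_apply (by omega), if_pos (by rw [Fin.val_rev]; omega), mul_one]
  · intro k _ hk
    rw [stdVec_apply (by omega), if_neg, mul_zero]
    rw [Fin.val_rev]
    omega

lemma betaF_stdVec_stdVec {i j : ℕ} (hi : 1 ≤ i) (hj : 1 ≤ j) :
    betaF n (stdVec n i) (stdVec n j) = if i + j = n + 1 then 1 else 0 := by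
  by_cases hjn : j ≤ n
  · have h := betaF_stdVec_right (stdVec n i) ⟨n - j, by omega⟩
    rw [stdVec_apply hi, Nat.sub_sub_self hjn] at h
    rw [h]
    exact if_congr (by simp only; omega) rfl rfl
  · have hzero : stdVec n j = 0 := dif_neg fun h => hjn h.2
    simp [betaF, hzero, show i + j ≠ n + 1 by omega]

lemma betaF_eq_zero_of_mem_stdSub {i j : ℕ} (hij : i + j ≤ n) {x y : Fin n → ℂ}
    (hx : x ∈ stdSub n i) (hy : y ∈ stdSub n j) : betaF n x y = 0 := by
  refine Finset.sum_eq_zero fun k _ => ?_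
  rcases le_or_gt i k with hk | hk
  · rw [mem_stdSub.1 hx k hk, zero_mul]
  · rw [mem_stdSub.1 hy k.rev (by rw [Fin.val_rev]; omega), mul_zero]

lemma mem_stdSub_of_forall_betaF_eq_zero {k : ℕ} {x : Fin n → ℂ}
    (hx : ∀ y ∈ stdSub n k, betaF n x y = 0) : x ∈ stdSub n (n - k) :=
  mem_stdSub.2 fun j hj => by
    rw [← betaF_stdVec_right x j]
    exact hx _ (stdVec_mem_stdSub (by omega) (by omega))

lemma betaF_eq_zero_of_mem_sup_span_singleton {U : Submodule ℂ (Fin n → ℂ)} {v : Fin n → ℂ}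
    (hU : ∀ x ∈ U, ∀ y ∈ U, betaF n x y = 0) (hUv : ∀ x ∈ U, betaF n x v = 0)
    (hv : betaF n v v = 0) :
    ∀ x ∈ U ⊔ span ℂ {v}, ∀ y ∈ U ⊔ span ℂ {v}, betaF n x y = 0 := by
  simp only [mem_sup, mem_span_singleton]
  rintro _ ⟨x, hx, _, ⟨s, rfl⟩, rfl⟩ _ ⟨y, hy, _, ⟨t, rfl⟩, rfl⟩
  simp only [betaF_add_left, betaF_add_right, betaF_smul_left, betaF_smul_right, hU x hx y hy,
    hUv x hx, betaF_comm v y, hUv y hy, hv, mul_zero, add_zero]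

end BetaF

/-! ### Flags extending the standard partial flag -/

/-- The chain `U_1 ⊂ ⋯ ⊂ U_{l-1} ⊂ U_{l-1} + ℂ v`, where `U_k = stdSub n k`; its values are constant
from degree `l` on, as in `IsIsoFlag`. -/
def completedFlag (n l : ℕ) (v : Fin n → ℂ) (k : ℕ) : Submodule ℂ (Fin n → ℂ) :=
  if k < l then stdSub n k else stdSub n (l - 1) ⊔ span ℂ {v}

section CompletedFlag

variable {n l k : ℕ} {v : Fin n → ℂ}

lemma completedFlag_of_lt (hk : k < l) : completedFlag n l v k = stdSub n k := if_pos hk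

lemma completedFlag_of_le (hk : l ≤ k) :
    completedFlag n l v k = stdSub n (l - 1) ⊔ span ℂ {v} := if_neg hk.not_gt

lemma completedFlag_inj {w : Fin n → ℂ} :
    completedFlag n l v = completedFlag n l w ↔
      stdSub n (l - 1) ⊔ span ℂ {v} = stdSub n (l - 1) ⊔ span ℂ {w} := by
  refine ⟨fun h => ?_, fun h => ?_⟩
  · simpa only [completedFlag_of_le le_rfl] using congrFun h l
  · funext k
    simp only [completedFlag, h]

lemma isIsoFlag_completedFlag (hl : 0 < l) (hln : 2 * (l - 1) ≤ n)
    (hv : v ∉ stdSub n (l - 1)) (hvU : v ∈ stdSub n (n - (l - 1))) (hvv : betaF n v v = 0) :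
    IsIsoFlag n l (completedFlag n l v) := by
  refine ⟨fun i hi => ?_, fun i => ?_, fun i hi => ?_, ?_⟩
  · rcases hi.lt_or_eq with hi | rfl
    · rw [completedFlag_of_lt hi, finrank_stdSub (by omega)]
    · rw [completedFlag_of_le le_rfl, finrank_sup_span_singleton hv, finrank_stdSub (by omega)]
      omega
  · unfold completedFlag
    split_ifs
    · exact stdSub_mono n (by omega)
    · exact (stdSub_mono n (by omega)).trans le_sup_left
    · omega
    · exact le_rfl
  · rw [completedFlag_of_le hi, completedFlag_of_le le_rfl]
  · rw [completedFlag_of_le le_rfl]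
    exact betaF_eq_zero_of_mem_sup_span_singleton
      (fun x hx y hy => betaF_eq_zero_of_mem_stdSub (by omega) hx hy)
      (fun x hx => betaF_eq_zero_of_mem_stdSub (by omega) hx hvU) hvv

lemma isoFlagOf_eq_completedFlag (hl : 0 < l) {w : ℕ → Fin n → ℂ}
    (hw : ∀ m < l, w m = stdVec n m) : isoFlagOf n l w = completedFlag n l (w l) := by
  have hspan : ∀ k < l, span ℂ (w '' Set.Icc 1 k) = stdSub n k := fun k hk =>
    congrArg (span ℂ) (Set.image_congr fun m hm => hw m (by grind))
  funext k
  rcases lt_or_ge k l with hk | hk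
  · rw [isoFlagOf, min_eq_left hk.le, hspan k hk, completedFlag_of_lt hk]
  · obtain ⟨p, rfl⟩ := Nat.exists_eq_add_one.2 hl
    rw [isoFlagOf, min_eq_right hk, span_image_Icc_succ, hspan p p.lt_succ_self,
      completedFlag_of_le hk, Nat.add_sub_cancel]

namespace IsIsoFlag

variable {V : ℕ → Submodule ℂ (Fin n → ℂ)}

lemma pred_le (hV : IsIsoFlag n l V) (hl : 0 < l) : V (l - 1) ≤ V l := by
  simpa only [Nat.sub_add_cancel hl] using hV.2.1 (l - 1)

lemma exists_mem_notMem_pred (hV : IsIsoFlag n l V) (hl : 0 < l) :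
    ∃ x ∈ V l, x ∉ V (l - 1) := by
  refine SetLike.not_le_iff_exists.1 fun hle => ?_
  have hrank := finrank_mono hle
  rw [hV.1 l le_rfl, hV.1 (l - 1) (Nat.sub_le l 1)] at hrank
  omega

lemma eq_pred_sup_span_singleton (hV : IsIsoFlag n l V) (hl : 0 < l) (hvV : v ∈ V l)
    (hv : v ∉ V (l - 1)) : V l = V (l - 1) ⊔ span ℂ {v} := by
  symm
  refine eq_of_le_of_finrank_eq
    (sup_le (hV.pred_le hl) ((span_singleton_le_iff_mem _ _).2 hvV)) ?_
  rw [finrank_sup_span_singleton hv, hV.1 (l - 1) (Nat.sub_le l 1), hV.1 l le_rfl,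
    Nat.sub_add_cancel hl]

lemma eq_stdSub_of_lt (hV : IsIsoFlag n l V)
    (hstd : ∀ m, 1 ≤ m → m ≤ l - 1 → V m = stdSub n m) (hk : k < l) : V k = stdSub n k := by
  rcases Nat.eq_zero_or_pos k with rfl | hk0
  · rw [stdSub_zero, ← finrank_eq_zero (R := ℂ), hV.1 0 (Nat.zero_le l)]
  · exact hstd k hk0 (by omega)

lemma eq_completedFlag (hV : IsIsoFlag n l V) (hl : 0 < l) (hstd : ∀ k < l, V k = stdSub n k)
    (hvV : v ∈ V l) (hv : v ∉ stdSub n (l - 1)) : V = completedFlag n l v := by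
  have hpred := hstd (l - 1) (Nat.sub_one_lt_of_lt hl)
  funext k
  rcases lt_or_ge k l with hk | hk
  · rw [completedFlag_of_lt hk, hstd k hk]
  · rw [completedFlag_of_le hk, hV.2.2.1 k hk,
      hV.eq_pred_sup_span_singleton hl hvV (hpred ▸ hv), hpred]

lemma le_stdSub_sub (hV : IsIsoFlag n l V) (hk : stdSub n k ≤ V l) : V l ≤ stdSub n (n - k) :=
  fun x hx => mem_stdSub_of_forall_betaF_eq_zero fun y hy => hV.2.2.2 x hx y (hk hy)

end IsIsoFlag

end CompletedFlag

/-! ### The conic of isotropic lines in `U_{l+2} / U_{l-1}` -/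

/-- The vector `a e_l + b e_0 + c e_{-l}` of `ℂ^{2l+1}`. -/
def middleVec (l : ℕ) (a b c : ℂ) : Fin (2 * l + 1) → ℂ :=
  a • stdVec (2 * l + 1) l + b • stdVec (2 * l + 1) (l + 1) + c • stdVec (2 * l + 1) (l + 2)

section MiddleVec

variable {l : ℕ} {a b c a' b' c' : ℂ}

lemma smul_middleVec (t : ℂ) : t • middleVec l a b c = middleVec l (t * a) (t * b) (t * c) := by
  simp only [middleVec, smul_add, mul_smul]

lemma middleVec_sub : middleVec l a b c - middleVec l a' b' c' =
    middleVec l (a - a') (b - b') (c - c') := by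
  simp only [middleVec, sub_smul]
  abel

lemma betaF_middleVec_right (x : Fin (2 * l + 1) → ℂ) :
    betaF (2 * l + 1) x (middleVec l a b c) =
      a * betaF (2 * l + 1) x (stdVec (2 * l + 1) l) +
        b * betaF (2 * l + 1) x (stdVec (2 * l + 1) (l + 1)) +
        c * betaF (2 * l + 1) x (stdVec (2 * l + 1) (l + 2)) := by
  simp only [middleVec, betaF_add_right, betaF_smul_right]

lemma betaF_middleVec_stdVec (hl : 0 < l) {m : ℕ} (hm : 1 ≤ m) :
    betaF (2 * l + 1) (middleVec l a b c) (stdVec (2 * l + 1) m) =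
      if m = l + 2 then a else if m = l + 1 then b else if m = l then c else 0 := by
  rw [betaF_comm, betaF_middleVec_right, betaF_stdVec_stdVec hm hl,
    betaF_stdVec_stdVec hm (by omega), betaF_stdVec_stdVec hm (by omega)]
  split_ifs <;> first | omega | simp

lemma betaF_middleVec_self (hl : 0 < l) :
    betaF (2 * l + 1) (middleVec l a b c) (middleVec l a b c) = 2 * a * c + b ^ 2 := by
  rw [betaF_middleVec_right, betaF_middleVec_stdVec hl hl,
    betaF_middleVec_stdVec hl (by omega), betaF_middleVec_stdVec hl (by omega)]
  simp only [Nat.left_eq_add, OfNat.ofNat_ne_zero, one_ne_zero, if_false, if_true,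
    Nat.add_left_cancel_iff, OfNat.one_ne_ofNat]
  ring

lemma middleVec_mem_stdSub_add_two (hl : 0 < l) :
    middleVec l a b c ∈ stdSub (2 * l + 1) (l + 2) :=
  add_mem (add_mem (smul_mem _ _ (stdVec_mem_stdSub hl (by omega)))
    (smul_mem _ _ (stdVec_mem_stdSub (by omega) (by omega))))
    (smul_mem _ _ (stdVec_mem_stdSub (by omega) le_rfl))

lemma middleVec_mem_stdSub_sub_one_iff (hl : 0 < l) :
    middleVec l a b c ∈ stdSub (2 * l + 1) (l - 1) ↔ a = 0 ∧ b = 0 ∧ c = 0 := by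
  constructor
  · intro h
    have hcoord : ∀ m, 1 ≤ m → m ≤ l + 2 →
        betaF (2 * l + 1) (middleVec l a b c) (stdVec (2 * l + 1) m) = 0 := fun m hm hml =>
      betaF_eq_zero_of_mem_stdSub (by omega) h (stdVec_mem_stdSub hm hml)
    have ha := hcoord (l + 2) (by omega) le_rfl
    have hb := hcoord (l + 1) (by omega) (by omega)
    have hc := hcoord l hl (by omega)
    rw [betaF_middleVec_stdVec hl (by omega)] at ha hb hc
    simp_all
  · rintro ⟨rfl, rfl, rfl⟩
    simp [middleVec]

lemma middleVec_mem_sup_span_singleton_iff (hl : 0 < l) :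
    middleVec l a b c ∈ stdSub (2 * l + 1) (l - 1) ⊔ span ℂ {middleVec l a' b' c'} ↔
      ∃ t : ℂ, a = t * a' ∧ b = t * b' ∧ c = t * c' := by
  simp only [mem_sup_span_singleton_iff, smul_middleVec, middleVec_sub,
    middleVec_mem_stdSub_sub_one_iff hl, sub_eq_zero]

lemma completedFlag_middleVec_inj (hl : 0 < l) (h : ¬(a = 0 ∧ b = 0 ∧ c = 0)) :
    completedFlag (2 * l + 1) l (middleVec l a b c) =
        completedFlag (2 * l + 1) l (middleVec l a' b' c') ↔
      ∃ t : ℂ, a = t * a' ∧ b = t * b' ∧ c = t * c' := by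
  rw [completedFlag_inj]
  constructor
  · intro heq
    rw [← middleVec_mem_sup_span_singleton_iff hl, ← heq]
    exact mem_sup_right (mem_span_singleton_self _)
  · rintro ⟨t, rfl, rfl, rfl⟩
    have ht : t ≠ 0 := by rintro rfl; simp at h
    rw [← smul_middleVec, span_singleton_smul_eq (IsUnit.mk0 t ht)]

lemma exists_sub_middleVec_mem (hl : 0 < l) {x : Fin (2 * l + 1) → ℂ}
    (hx : x ∈ stdSub (2 * l + 1) (l + 2)) :
    ∃ a b c : ℂ, x - middleVec l a b c ∈ stdSub (2 * l + 1) (l - 1) := by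
  obtain ⟨p, rfl⟩ := Nat.exists_eq_add_one.2 hl
  rw [stdSub_succ _ (p + 2), stdSub_succ _ (p + 1), stdSub_succ _ p] at hx
  obtain ⟨c, hc⟩ := mem_sup_span_singleton_iff.1 hx
  obtain ⟨b, hb⟩ := mem_sup_span_singleton_iff.1 hc
  obtain ⟨a, ha⟩ := mem_sup_span_singleton_iff.1 hb
  have hsub : x - middleVec (p + 1) a b c = x - c • stdVec _ (p + 3) - b • stdVec _ (p + 2) -
      a • stdVec _ (p + 1) := by
    simp only [middleVec]
    abel
  exact ⟨a, b, c, hsub ▸ ha⟩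

lemma isIsoFlag_completedFlag_middleVec (hl : 0 < l) (h : ¬(a = 0 ∧ b = 0 ∧ c = 0))
    (hq : 2 * a * c + b ^ 2 = 0) :
    IsIsoFlag (2 * l + 1) l (completedFlag (2 * l + 1) l (middleVec l a b c)) :=
  isIsoFlag_completedFlag hl (by omega) (mt (middleVec_mem_stdSub_sub_one_iff hl).1 h)
    (stdSub_mono _ (by omega) (middleVec_mem_stdSub_add_two hl))
    ((betaF_middleVec_self hl).trans hq)

lemma IsIsoFlag.exists_eq_completedFlag_middleVec
    {V : ℕ → Submodule ℂ (Fin (2 * l + 1) → ℂ)} (hV : IsIsoFlag (2 * l + 1) l V) (hl : 0 < l)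
    (hstd : ∀ m, 1 ≤ m → m ≤ l - 1 → V m = stdSub (2 * l + 1) m) :
    ∃ a b c : ℂ, ¬(a = 0 ∧ b = 0 ∧ c = 0) ∧ 2 * a * c + b ^ 2 = 0 ∧
      V = completedFlag (2 * l + 1) l (middleVec l a b c) := by
  have hlow : ∀ k < l, V k = stdSub (2 * l + 1) k := fun k hk => hV.eq_stdSub_of_lt hstd hk
  have hpred := hlow (l - 1) (Nat.sub_one_lt_of_lt hl)
  have hle : stdSub (2 * l + 1) (l - 1) ≤ V l := hpred ▸ hV.pred_le hl
  obtain ⟨x, hxV, hx⟩ := hV.exists_mem_notMem_pred hl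
  rw [hpred] at hx
  obtain ⟨a, b, c, hsub⟩ := exists_sub_middleVec_mem hl
    (stdSub_mono _ (by omega) (hV.le_stdSub_sub hle hxV))
  have hvV : middleVec l a b c ∈ V l := (sub_mem_iff_right _ hxV).1 (hle hsub)
  have hv : middleVec l a b c ∉ stdSub (2 * l + 1) (l - 1) := fun h =>
    hx ((sub_mem_iff_left _ h).1 hsub)
  exact ⟨a, b, c, mt (middleVec_mem_stdSub_sub_one_iff hl).2 hv,
    (betaF_middleVec_self hl).symm.trans (hV.2.2.2 _ hvV _ hvV),
    hV.eq_completedFlag hl hlow hvV hv⟩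

end MiddleVec

/-! ### Diagonal elements of `K` -/

/-- The diagonal automorphism `e_m ↦ d m • e_m` of `ℂ^n`, with the 1-based labels of `stdVec`. -/
def diagEquiv (n : ℕ) (d : ℕ → ℂˣ) : (Fin n → ℂ) ≃ₗ[ℂ] (Fin n → ℂ) :=
  LinearEquiv.piCongrRight fun j => LinearEquiv.smulOfUnit (d (j + 1))

section DiagEquiv

variable {n : ℕ} {d : ℕ → ℂˣ}

lemma diagEquiv_apply (x : Fin n → ℂ) (j : Fin n) : diagEquiv n d x j = d (j + 1) * x j := rfl

lemma diagEquiv_stdVec (m : ℕ) : diagEquiv n d (stdVec n m) = (d m : ℂ) • stdVec n m := by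
  rcases Nat.eq_zero_or_pos m with rfl | hm
  · simp [stdVec]
  · ext j
    rw [diagEquiv_apply, Pi.smul_apply, stdVec_apply hm]
    split_ifs with hj <;> simp [hj]

lemma map_diagEquiv_stdSub (k : ℕ) :
    map (diagEquiv n d).toLinearMap (stdSub n k) = stdSub n k := by
  refine eq_of_le_of_finrank_eq ?_ (LinearEquiv.finrank_map_eq _ _)
  rintro _ ⟨x, hx, rfl⟩
  refine mem_stdSub.2 fun j hj => ?_
  rw [LinearEquiv.coe_coe, diagEquiv_apply, mem_stdSub.1 hx j hj, mul_zero]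

lemma det_diagEquiv :
    LinearMap.det (diagEquiv n d).toLinearMap = ∏ j : Fin n, (d (j + 1) : ℂ) := by
  have hpi : (diagEquiv n d).toLinearMap =
      LinearMap.pi fun j : Fin n => ((d (j + 1) : ℂ) • LinearMap.id) ∘ₗ LinearMap.proj j := rfl
  rw [hpi, LinearMap.det_pi]
  simp

lemma diagEquiv_mem_SOgrp (hd : ∀ i j, i + j = n + 1 → d i * d j = 1)
    (hd₀ : ∀ i, i + i = n + 1 → d i = 1) : diagEquiv n d ∈ SOgrp n := by
  have hrev : ∀ j : Fin n, (d (j + 1) : ℂ) * d (j.rev + 1) = 1 := fun j => by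
    have hsum : (j : ℕ) + 1 + (j.rev + 1) = n + 1 := by rw [Fin.val_rev]; omega
    rw [← Units.val_mul, hd _ _ hsum, Units.val_one]
  refine ⟨?_, fun x y => Finset.sum_congr rfl fun j _ => ?_⟩
  · rw [det_diagEquiv]
    refine Finset.prod_involution (fun j _ => j.rev) (fun j _ => hrev j) (fun j _ hj hfix => ?_)
      (fun _ _ => Finset.mem_univ _) (fun j _ => Fin.rev_rev j)
    have hmid := congrArg Fin.val hfix
    rw [Fin.val_rev] at hmid
    exact hj (by rw [hd₀ _ (by omega), Units.val_one])
  · rw [diagEquiv_apply, diagEquiv_apply]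
    linear_combination x j * y j.rev * hrev j

lemma actFlag_diagEquiv_completedFlag (l : ℕ) (v : Fin n → ℂ) :
    actFlag n (diagEquiv n d) (completedFlag n l v) = completedFlag n l (diagEquiv n d v) := by
  funext k
  rw [actFlag]
  rcases lt_or_ge k l with hk | hk
  · rw [completedFlag_of_lt hk, completedFlag_of_lt hk, map_diagEquiv_stdSub]
  · rw [completedFlag_of_le hk, completedFlag_of_le hk, Submodule.map_sup, map_diagEquiv_stdSub,
      map_span, Set.image_singleton, LinearEquiv.coe_coe]

end DiagEquiv

/-! ### `K`-orbits on the conic -/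

section Orbit

variable {l : ℕ} {a b c a' b' c' : ℂ}

lemma exists_mem_Kodd_actFlag_middleVec (l : ℕ) (u : ℂˣ) :
    ∃ g ∈ Kodd l, ∀ a b c,
      actFlag (2 * l + 1) g (completedFlag (2 * l + 1) l (middleVec l a b c)) =
        completedFlag (2 * l + 1) l (middleVec l (u * a) b (↑u⁻¹ * c)) := by
  let d : ℕ → ℂˣ := fun m => if m = l then u else if m = l + 2 then u⁻¹ else 1
  have hd : ∀ i j, i + j = 2 * l + 1 + 1 → d i * d j = 1 := fun i j hij => by
    simp only [d]
    split_ifs <;> first | omega | simp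
  have hl₀ : d l = u := by simp [d]
  have hl₁ : d (l + 1) = 1 := by simp [d]
  have hl₂ : d (l + 2) = u⁻¹ := by simp [d]
  refine ⟨diagEquiv _ d, ⟨diagEquiv_mem_SOgrp hd fun i hi => ?_, ?_⟩, fun a b c => ?_⟩
  · rw [show i = l + 1 by omega, hl₁]
  · rw [diagEquiv_stdVec, hl₁, Units.val_one, one_smul]
  · rw [actFlag_diagEquiv_completedFlag]
    congr 1
    simp only [middleVec, map_add, map_smul, diagEquiv_stdVec, hl₀, hl₁, hl₂, smul_smul,
      Units.val_one, mul_one, mul_comm]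

lemma InKOddOrbit.middle_coeff_ne_zero (hl : 0 < l)
    (h : InKOddOrbit l (completedFlag (2 * l + 1) l (middleVec l a b c))
      (completedFlag (2 * l + 1) l (middleVec l a' b' c'))) (hb : b ≠ 0) : b' ≠ 0 := by
  rintro rfl
  obtain ⟨g, ⟨⟨-, hg⟩, hge⟩, hflag⟩ := h
  have hmem : g (middleVec l a b c) ∈
      stdSub (2 * l + 1) (l - 1) ⊔ span ℂ {middleVec l a' 0 c'} := by
    rw [← completedFlag_of_le le_rfl, ← hflag, actFlag, completedFlag_of_le le_rfl]
    exact mem_map_of_mem (mem_sup_right (mem_span_singleton_self _))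
  obtain ⟨y, hy, _, hz, hyz⟩ := mem_sup.1 hmem
  obtain ⟨t, rfl⟩ := mem_span_singleton.1 hz
  have hcoord := hg (middleVec l a b c) (stdVec (2 * l + 1) (l + 1))
  rw [hge, ← hyz, betaF_add_left, betaF_smul_left,
    betaF_eq_zero_of_mem_stdSub (by omega) hy (stdVec_mem_stdSub (by omega) le_rfl),
    betaF_middleVec_stdVec hl (by omega),
    betaF_middleVec_stdVec hl (by omega)] at hcoord
  exact hb (by simpa using hcoord.symm)

lemma inKOddOrbit_completedFlag_middleVec (hl : 0 < l) (hb : b ≠ 0) (hb' : b' ≠ 0)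
    (hq : 2 * a * c + b ^ 2 = 0) (hq' : 2 * a' * c' + b' ^ 2 = 0) :
    InKOddOrbit l (completedFlag (2 * l + 1) l (middleVec l a b c))
      (completedFlag (2 * l + 1) l (middleVec l a' b' c')) := by
  have ha : a ≠ 0 := by rintro rfl; simp [hb] at hq
  have ha' : a' ≠ 0 := by rintro rfl; simp [hb'] at hq'
  obtain ⟨g, hg, hflag⟩ := exists_mem_Kodd_actFlag_middleVec l
    (Units.mk0 (b / b' * a' / a) (by positivity))
  refine ⟨g, hg, ?_⟩
  rw [hflag, completedFlag_middleVec_inj hl (by simp [hb])]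
  refine ⟨b / b', ?_, ?_, ?_⟩
  · rw [Units.val_mk0]
    field_simp
  · field_simp
  · rw [Units.val_inv_eq_inv_val, Units.val_mk0]
    field_simp
    linear_combination (b' ^ 2 * hq - b ^ 2 * hq') / 2

lemma inKOddOrbit_completedFlag_middleVec_iff (hl : 0 < l) (hb : b ≠ 0)
    (hq : 2 * a * c + b ^ 2 = 0) (hq' : 2 * a' * c' + b' ^ 2 = 0) :
    InKOddOrbit l (completedFlag (2 * l + 1) l (middleVec l a b c))
      (completedFlag (2 * l + 1) l (middleVec l a' b' c')) ↔ b' ≠ 0 :=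
  ⟨fun h => h.middle_coeff_ne_zero hl hb, fun hb' =>
    inKOddOrbit_completedFlag_middleVec hl hb hb' hq hq'⟩

end Orbit

/-! ### The representatives `F_+`, `F_-` and `F_{l-1}` -/

section Representatives

variable {l : ℕ} {a b c : ℂ}

lemma repSOFlag_plus (hl : 0 < l) :
    repSOFlag l l = completedFlag (2 * l + 1) l (middleVec l 1 0 0) := by
  have hvec : repSOVec l l = stdVec (2 * l + 1) := by
    funext m
    rw [repSOVec, if_neg (by omega), if_pos rfl]
  rw [repSOFlag, isoFlagOf_eq_completedFlag hl (by simp [hvec]), hvec]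
  simp [middleVec]

lemma repSOFlag_minus (hl : 0 < l) :
    repSOFlag l (l + 1) = completedFlag (2 * l + 1) l (middleVec l 0 0 1) := by
  rw [repSOFlag, isoFlagOf_eq_completedFlag hl fun m hm => ?_]
  · congr 1
    rw [repSOVec, if_neg (by omega), if_neg (by omega), if_neg (by omega)]
    simp [middleVec]
  · rw [repSOVec, if_neg (by omega), if_neg (by omega), if_pos (by omega)]

lemma repSOFlag_sub_one (hl : 0 < l) :
    repSOFlag l (l - 1) =
      completedFlag (2 * l + 1) l (middleVec l 1 ((Real.sqrt 2 : ℂ) * Complex.I) 1) := by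
  rw [repSOFlag, isoFlagOf_eq_completedFlag hl fun m hm => ?_]
  · congr 1
    rw [repSOVec, if_pos le_rfl, if_neg (by omega), if_pos (by omega)]
    simp [middleVec, wvec]
  · rw [repSOVec, if_pos le_rfl, if_pos (by omega)]

lemma sqrt_two_mul_I_sq : ((Real.sqrt 2 : ℂ) * Complex.I) ^ 2 = -2 := by
  rw [mul_pow, Complex.I_sq, ← Complex.ofReal_pow, Real.sq_sqrt zero_le_two]
  norm_num

lemma completedFlag_middleVec_eq_repSOFlag_plus_iff (hl : 0 < l)
    (h : ¬(a = 0 ∧ b = 0 ∧ c = 0)) :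
    completedFlag (2 * l + 1) l (middleVec l a b c) = repSOFlag l l ↔ b = 0 ∧ c = 0 := by
  simp [repSOFlag_plus hl, completedFlag_middleVec_inj hl h]

lemma completedFlag_middleVec_eq_repSOFlag_minus_iff (hl : 0 < l)
    (h : ¬(a = 0 ∧ b = 0 ∧ c = 0)) :
    completedFlag (2 * l + 1) l (middleVec l a b c) = repSOFlag l (l + 1) ↔ a = 0 ∧ b = 0 := by
  simp [repSOFlag_minus hl, completedFlag_middleVec_inj hl h]

lemma inKOddOrbit_repSOFlag_sub_one_iff (hl : 0 < l) (hq : 2 * a * c + b ^ 2 = 0) :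
    InKOddOrbit l (repSOFlag l (l - 1)) (completedFlag (2 * l + 1) l (middleVec l a b c)) ↔
      b ≠ 0 := by
  rw [repSOFlag_sub_one hl]
  refine inKOddOrbit_completedFlag_middleVec_iff hl (by simp) ?_ hq
  rw [sqrt_two_mul_I_sq]
  norm_num

end Representatives

theorem stmt_16_general (l : ℕ) (hl : 0 < l) :
    (∀ V : ℕ → Submodule ℂ (Fin (2 * l + 1) → ℂ), IsIsoFlag (2 * l + 1) l V →
      (∀ m, 1 ≤ m → m ≤ l - 1 → V m = stdSub (2 * l + 1) m) →
      (V = repSOFlag l l ∧ V ≠ repSOFlag l (l + 1) ∧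
          ¬ InKOddOrbit l (repSOFlag l (l - 1)) V) ∨
        (V ≠ repSOFlag l l ∧ V = repSOFlag l (l + 1) ∧
          ¬ InKOddOrbit l (repSOFlag l (l - 1)) V) ∨
        (V ≠ repSOFlag l l ∧ V ≠ repSOFlag l (l + 1) ∧
          InKOddOrbit l (repSOFlag l (l - 1)) V)) ∧
    (∃ V, IsIsoFlag (2 * l + 1) l V ∧
      (∀ m, 1 ≤ m → m ≤ l - 1 → V m = stdSub (2 * l + 1) m) ∧ V = repSOFlag l l) ∧
    (∃ V, IsIsoFlag (2 * l + 1) l V ∧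
      (∀ m, 1 ≤ m → m ≤ l - 1 → V m = stdSub (2 * l + 1) m) ∧ V = repSOFlag l (l + 1)) ∧
    (∃ V, IsIsoFlag (2 * l + 1) l V ∧
      (∀ m, 1 ≤ m → m ≤ l - 1 → V m = stdSub (2 * l + 1) m) ∧
      InKOddOrbit l (repSOFlag l (l - 1)) V) := by
  have hlow : ∀ v m, 1 ≤ m → m ≤ l - 1 →
      completedFlag (2 * l + 1) l v m = stdSub (2 * l + 1) m := fun v m _ hm =>
    completedFlag_of_lt (by omega)
  refine ⟨fun V hV hstd => ?_,
    ⟨_, isIsoFlag_completedFlag_middleVec hl (by simp) (by simp), hlow _,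
      (repSOFlag_plus hl).symm⟩,
    ⟨_, isIsoFlag_completedFlag_middleVec hl (by simp) (by simp), hlow _,
      (repSOFlag_minus hl).symm⟩,
    ?_⟩
  · obtain ⟨a, b, c, hne, hq, rfl⟩ := hV.exists_eq_completedFlag_middleVec hl hstd
    rw [ne_eq, ne_eq, completedFlag_middleVec_eq_repSOFlag_plus_iff hl hne,
      completedFlag_middleVec_eq_repSOFlag_minus_iff hl hne,
      inKOddOrbit_repSOFlag_sub_one_iff hl hq]
    have hac : b = 0 → a = 0 ∨ c = 0 := by
      rintro rfl
      simpa using hq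
    tauto
  · have hq : 2 * (-1 : ℂ) * 2 + 2 ^ 2 = 0 := by norm_num
    exact ⟨_, isIsoFlag_completedFlag_middleVec hl (by simp) hq, hlow _,
      (inKOddOrbit_repSOFlag_sub_one_iff hl hq).2 two_ne_zero⟩

/-- If a maximal isotropic flag in `ℂ^{2l+1}` has `m`-th subspace `span(e_1, …, e_m)` for
every `1 ≤ m ≤ l-1`, then exactly one of the following holds: it equals
`F_+ = repSOFlag l l`; it equals `F_- = repSOFlag l (l+1)`; it lies in the `K`-orbit of
`F_{l-1} = repSOFlag l (l-1)`; moreover each possibility occurs (the root `α_l` is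
noncompact for `Q_±` and `m(s_{α_l}) * Q_+ = m(s_{α_l}) * Q_- = K·F_{l-1}`). -/
theorem stmt_16 (l : ℕ) (hl : 2 ≤ l) :
    (∀ V : ℕ → Submodule ℂ (Fin (2 * l + 1) → ℂ), IsIsoFlag (2 * l + 1) l V →
      (∀ m, 1 ≤ m → m ≤ l - 1 → V m = stdSub (2 * l + 1) m) →
      (V = repSOFlag l l ∧ V ≠ repSOFlag l (l + 1) ∧
          ¬ InKOddOrbit l (repSOFlag l (l - 1)) V) ∨
        (V ≠ repSOFlag l l ∧ V = repSOFlag l (l + 1) ∧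
          ¬ InKOddOrbit l (repSOFlag l (l - 1)) V) ∨
        (V ≠ repSOFlag l l ∧ V ≠ repSOFlag l (l + 1) ∧
          InKOddOrbit l (repSOFlag l (l - 1)) V)) ∧
    (∃ V, IsIsoFlag (2 * l + 1) l V ∧
      (∀ m, 1 ≤ m → m ≤ l - 1 → V m = stdSub (2 * l + 1) m) ∧ V = repSOFlag l l) ∧
    (∃ V, IsIsoFlag (2 * l + 1) l V ∧
      (∀ m, 1 ≤ m → m ≤ l - 1 → V m = stdSub (2 * l + 1) m) ∧ V = repSOFlag l (l + 1)) ∧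
    (∃ V, IsIsoFlag (2 * l + 1) l V ∧
      (∀ m, 1 ≤ m → m ≤ l - 1 → V m = stdSub (2 * l + 1) m) ∧
      InKOddOrbit l (repSOFlag l (l - 1)) V) := by
  exact stmt_16_general l (by omega)
end
end

section
/- If F' is a maximal isotropic flag in ℂ^{2l} whose m-th subspace agrees with the m-th subspace of the standard flag F_l = (e_1 ⊂ ⋯ ⊂ e_l) for every m ≠ l-1, then either F' = F_l or F' lies in the K-orbit of F_{l-1} = (e_1 ⊂ ⋯ ⊂ e_{l-2} ⊂ e_l ⊂ e_{l-1}); moreover both possibilities occur. (This realizes set-theoretically that α_{l-1} is complex stable for the closed K-orbit Q_+ = K·F_l and that m(s_{α_{l-1}})*Q_+ = Q_{l-1} = K·F_{l-1}.) -/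
open Module Submodule

noncomputable section

/-- `K = {g ∈ SO(2l) : g (e_l - e_{-l}) = e_l - e_{-l}}` (here `e_{-l} = e_{l+1}`),
a copy of `SO(2l-1)`. -/
def Keven (l : ℕ) : Set ((Fin (2 * l) → ℂ) ≃ₗ[ℂ] (Fin (2 * l) → ℂ)) :=
  {g | g ∈ SOgrp (2 * l) ∧
       g (stdVec (2 * l) l - stdVec (2 * l) (l + 1)) =
         stdVec (2 * l) l - stdVec (2 * l) (l + 1)}

/-- `V'` lies in the `K`-orbit of `V`. -/
def InKEvenOrbit (l : ℕ) (V V' : ℕ → Submodule ℂ (Fin (2 * l) → ℂ)) : Prop :=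
  ∃ g ∈ Keven l, actFlag (2 * l) g V = V'

/-- `F_i = (e_1 ⊂ ⋯ ⊂ e_{i-1} ⊂ e_l ⊂ e_i ⊂ ⋯ ⊂ e_{l-1})` (`e_l` in position `i`). -/
def repEVec (l i m : ℕ) : Fin (2 * l) → ℂ :=
  if m < i then stdVec (2 * l) m
  else if m = i then stdVec (2 * l) l
  else stdVec (2 * l) (m - 1)

def repEFlag (l i : ℕ) : ℕ → Submodule ℂ (Fin (2 * l) → ℂ) :=
  isoFlagOf (2 * l) l (repEVec l i)

/-!
Write `d = e_l - e_{-l}`, the vector fixed by `K`. The flags agreeing with `F_l` in every degree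
`m ≠ l - 1` correspond to the lines of the plane `⟨e_{l-1}, e_l⟩` modulo `⟨e_1, …, e_{l-2}⟩`. The
line of `e_{l-1}` gives `F_l`, that of `e_l` gives `F_{l-1}`, and every line other than that of
`e_{l-1}` is spanned by some `e_l + a e_{l-1}`. The Eichler transformation of the isotropic vector
`e_{l-1}` and of `-a (e_l + e_{-l})` fixes `e_1, …, e_{l-1}` and `d`, all of which are orthogonal to
both vectors, and sends `e_l` to `e_l + a e_{l-1}`, so all these flags lie in the `K`-orbit of
`F_{l-1}`. That orbit misses `F_l`: `β(d, ·)` is `K`-invariant, vanishes on `⟨e_1, …, e_{l-1}⟩` and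
not on `e_l`.
-/

section Eichler

variable {R M : Type*} [CommRing R] [AddCommGroup M] [Module R M]
  {B : LinearMap.BilinForm R M} {u w : M}

/-- The Eichler transformation (Siegel transvection) `E(u, w)` of an isotropic vector `u` and a
vector `w` orthogonal to it, as a product of two transvections. The parameter `q` stands for
`B w w / 2`, so that `2` need not be invertible. -/
def eichlerEquiv (huu : B u u = 0) (huw : B u w = 0) (q : R) : M ≃ₗ[R] M :=
  (LinearEquiv.transvection (f := B.flip w) (v := -u) (by simp [huw])).trans
    (LinearEquiv.transvection (f := B u) (v := w - q • u) (by simp [huu, huw]))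

theorem eichlerEquiv_apply (huu : B u u = 0) (huw : B u w = 0) (q : R) (x : M) :
    eichlerEquiv huu huw q x = x + B u x • w - (B x w + q * B u x) • u := by
  simp only [eichlerEquiv, LinearEquiv.trans_apply, LinearEquiv.transvection.apply, map_add,
    map_smul, map_neg, huu, LinearMap.BilinForm.flip_apply]
  module

theorem eichlerEquiv_apply_of_ortho (huu : B u u = 0) (huw : B u w = 0) (q : R) {x : M}
    (hux : B u x = 0) : eichlerEquiv huu huw q x = x - B x w • u := by
  simp [eichlerEquiv_apply, hux]

theorem bilin_eichlerEquiv (hB : B.IsSymm) (huu : B u u = 0) (huw : B u w = 0) {q : R}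
    (hq : B w w = 2 * q) (x y : M) :
    B (eichlerEquiv huu huw q x) (eichlerEquiv huu huw q y) = B x y := by
  simp only [eichlerEquiv_apply, map_add, map_sub, map_smul, LinearMap.add_apply,
    LinearMap.sub_apply, LinearMap.smul_apply, smul_eq_mul, huu, huw, hq, hB.eq w u, hB.eq x u,
    hB.eq w y]
  ring

theorem det_eichlerEquiv [Module.Free R M] [Module.Finite R M] (huu : B u u = 0) (huw : B u w = 0)
    (q : R) : LinearMap.det (eichlerEquiv huu huw q).toLinearMap = 1 := by
  simp [eichlerEquiv, LinearEquiv.coe_trans, LinearMap.det_comp, huu, huw]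

end Eichler

theorem mem_or_exists_add_smul_mem {K E : Type*} [DivisionRing K] [AddCommGroup E] [Module K E]
    {U W : Submodule K E} {x y : E} (hUW : U < W) (hW : W ≤ U ⊔ span K {x, y}) :
    x ∈ W ∨ ∃ a : K, y + a • x ∈ W := by
  obtain ⟨v, hvW, hvU⟩ := SetLike.exists_of_lt hUW
  obtain ⟨u, hu, z, hz, rfl⟩ := mem_sup.mp (hW hvW)
  obtain ⟨b, c, rfl⟩ := mem_span_pair.mp hz
  have hbc : b • x + c • y ∈ W := (W.add_mem_iff_right (hUW.le hu)).mp hvW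
  obtain rfl | hc := eq_or_ne c 0
  · have hb : b ≠ 0 := by
      rintro rfl
      exact hvU (by simpa using hu)
    exact Or.inl ((W.smul_mem_iff hb).mp (by simpa using hbc))
  · refine Or.inr ⟨c⁻¹ * b, ?_⟩
    convert W.smul_mem c⁻¹ hbc using 1
    rw [smul_add, smul_smul, inv_smul_smul₀ hc, add_comm]

section Form

/-- `betaF n` bundled as a bilinear form, to make the linear algebra of bilinear forms available. -/
def betaBilin (n : ℕ) : LinearMap.BilinForm ℂ (Fin n → ℂ) :=
  LinearMap.mk₂ ℂ (betaF n)
    (fun x y z => by simp [betaF, add_mul, Finset.sum_add_distrib])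
    (fun c x y => by simp [betaF, Finset.mul_sum, mul_assoc])
    (fun x y z => by simp [betaF, mul_add, Finset.sum_add_distrib])
    (fun c x y => by simp [betaF, Finset.mul_sum, mul_left_comm])

theorem betaBilin_apply (n : ℕ) (x y : Fin n → ℂ) : betaBilin n x y = betaF n x y := rfl

theorem betaBilin_isSymm (n : ℕ) : (betaBilin n).IsSymm where
  eq x y := by
    simp only [betaBilin_apply, betaF]
    rw [← Equiv.sum_comp Fin.revPerm]
    simp [mul_comm]

theorem stdVec_val_add_one {n : ℕ} (j : Fin n) : stdVec n (j + 1) = Pi.single j 1 := by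
  simp [stdVec]

theorem exists_val_add_one_eq {n m : ℕ} (hm : m ∈ Set.Icc 1 n) : ∃ j : Fin n, (j : ℕ) + 1 = m :=
  ⟨⟨m - 1, by grind⟩, by grind⟩

theorem linearIndepOn_stdVec (n : ℕ) : LinearIndepOn ℂ (stdVec n) (Set.Icc 1 n) := by
  have hinj : Function.Injective fun j : Fin n => (j : ℕ) + 1 := fun _ _ h => by grind
  have hbasis : stdVec n ∘ (fun j : Fin n => (j : ℕ) + 1) = Pi.basisFun ℂ (Fin n) :=
    funext fun j => by simp [stdVec_val_add_one]
  refine ((linearIndepOn_range_iff hinj _).mpr ?_).mono fun _ hm => exists_val_add_one_eq hm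
  exact hbasis ▸ (Pi.basisFun ℂ (Fin n)).linearIndependent

theorem betaBilin_stdVec_stdVec {n m k : ℕ} (hm : m ∈ Set.Icc 1 n) (hk : k ∈ Set.Icc 1 n) :
    betaBilin n (stdVec n m) (stdVec n k) = if m + k = n + 1 then 1 else 0 := by
  obtain ⟨i, rfl⟩ := exists_val_add_one_eq hm
  obtain ⟨j, rfl⟩ := exists_val_add_one_eq hk
  have hrev : j = i.rev ↔ (i : ℕ) + 1 + (j + 1) = n + 1 := by
    rw [Fin.ext_iff, Fin.val_rev]
    omega
  simp [betaBilin_apply, betaF, stdVec_val_add_one, Pi.single_apply, Fin.rev_eq_iff, hrev]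

end Form

section Flags

variable {n l : ℕ} {V W : ℕ → Submodule ℂ (Fin n → ℂ)} {v w : ℕ → Fin n → ℂ}

namespace IsIsoFlag

theorem monotone (hV : IsIsoFlag n l V) : Monotone V :=
  monotone_nat_of_le_succ hV.2.1

theorem strictMonoOn (hV : IsIsoFlag n l V) : StrictMonoOn V (Set.Iic l) := by
  refine fun i hi j hj hij => lt_of_le_of_ne (hV.monotone hij.le) fun h => hij.ne ?_
  rw [← hV.1 i hi, ← hV.1 j hj, h]

theorem eq_of_le (hV : IsIsoFlag n l V) (hW : IsIsoFlag n l W) (h : ∀ m ≤ l, V m ≤ W m) :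
    V = W := by
  have heq (m : ℕ) (hm : m ≤ l) : V m = W m :=
    Submodule.eq_of_le_of_finrank_eq (h m hm) ((hV.1 m hm).trans (hW.1 m hm).symm)
  funext m
  obtain hm | hm := le_total m l
  · exact heq m hm
  · rw [hV.2.2.1 m hm, hW.2.2.1 m hm, heq l le_rfl]

protected theorem actFlag (hV : IsIsoFlag n l V) {g : (Fin n → ℂ) ≃ₗ[ℂ] (Fin n → ℂ)}
    (hg : ∀ x y, betaF n (g x) (g y) = betaF n x y) : IsIsoFlag n l (actFlag n g V) := by
  obtain ⟨hrank, hle, hconst, hiso⟩ := hV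
  refine ⟨fun i hi => (g.finrank_map_eq _).trans (hrank i hi), fun i => map_mono (hle i),
    fun i hi => congrArg (map g.toLinearMap) (hconst i hi), ?_⟩
  rintro _ ⟨x, hx, rfl⟩ _ ⟨y, hy, rfl⟩
  exact (hg x y).trans (hiso x hx y hy)

end IsIsoFlag

theorem isoFlagOf_apply_congr {m : ℕ} (h : ∀ k ∈ Set.Icc 1 (min m l), v k = w k) :
    isoFlagOf n l v m = isoFlagOf n l w m :=
  congrArg (span ℂ) (Set.image_congr h)

theorem mem_isoFlagOf {k m : ℕ} (hk : k ∈ Set.Icc 1 (min m l)) : v k ∈ isoFlagOf n l v m :=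
  subset_span (Set.mem_image_of_mem v hk)

theorem isoFlagOf_succ {m : ℕ} (hm : m < l) :
    isoFlagOf n l v (m + 1) = isoFlagOf n l v m ⊔ span ℂ {v (m + 1)} := by
  rw [isoFlagOf, isoFlagOf, min_eq_left hm, min_eq_left hm.le, ← span_union, ← Set.image_singleton,
    ← Set.image_union]
  congr 2
  grind

theorem isoFlagOf_add_two {m : ℕ} (hm : m + 2 ≤ l) :
    isoFlagOf n l v (m + 2) = isoFlagOf n l v m ⊔ span ℂ {v (m + 1), v (m + 2)} := by
  rw [isoFlagOf_succ hm, isoFlagOf_succ (by omega), sup_assoc, ← span_union, Set.singleton_union]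

theorem actFlag_isoFlagOf (g : (Fin n → ℂ) ≃ₗ[ℂ] (Fin n → ℂ)) :
    actFlag n g (isoFlagOf n l v) = isoFlagOf n l (g ∘ v) := by
  funext m
  rw [actFlag, isoFlagOf, map_span, isoFlagOf, Set.image_comp]
  rfl

theorem isIsoFlag_isoFlagOf (hli : LinearIndepOn ℂ v (Set.Icc 1 l))
    (hiso : ∀ i ∈ Set.Icc 1 l, ∀ j ∈ Set.Icc 1 l, betaF n (v i) (v j) = 0) :
    IsIsoFlag n l (isoFlagOf n l v) := by
  refine ⟨fun i hi => ?_, fun i => ?_, fun i hi => by simp [isoFlagOf, hi], fun x hx y hy => ?_⟩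
  · rw [isoFlagOf, min_eq_left hi, Set.image_eq_range,
      finrank_span_eq_card (hli.mono (Set.Icc_subset_Icc_right hi))]
    simp
  · exact span_mono (Set.image_mono (Set.Icc_subset_Icc_right (by omega)))
  · rw [isoFlagOf, min_self] at hx hy
    rw [← betaBilin_apply]
    induction hx, hy using span_induction₂ with
    | mem_mem _ _ hx hy =>
      obtain ⟨i, hi, rfl⟩ := hx
      obtain ⟨j, hj, rfl⟩ := hy
      exact hiso i hi j hj
    | _ => simp_all

theorem IsIsoFlag.isoFlagOf_eq (hV : IsIsoFlag n l V) (hv : IsIsoFlag n l (isoFlagOf n l v))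
    (h : ∀ m ∈ Set.Icc 1 l, v m ∈ V m) : isoFlagOf n l v = V := by
  refine hv.eq_of_le hV fun m hm => span_le.mpr ?_
  rintro _ ⟨k, hk, rfl⟩
  exact hV.monotone (by grind) (h k (by grind))

end Flags

section StandardFlags

variable {l i m : ℕ}

/-- The index `σ(m)` of the vector `e_{σ(m)}` in position `m` of the flag `F_i`. -/
def repEIndex (l i m : ℕ) : ℕ :=
  if m < i then m else if m = i then l else m - 1

theorem repEVec_eq_stdVec_repEIndex (l i : ℕ) : repEVec l i = stdVec (2 * l) ∘ repEIndex l i := by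
  funext m
  simp only [repEVec, Function.comp_apply, repEIndex]
  split_ifs <;> rfl

theorem bijOn_repEIndex (hi : 1 ≤ i) : Set.BijOn (repEIndex l i) (Set.Icc 1 l) (Set.Icc 1 l) := by
  have hmaps : Set.MapsTo (repEIndex l i) (Set.Icc 1 l) (Set.Icc 1 l) := by
    grind [repEIndex, Set.MapsTo]
  have hinj : Set.InjOn (repEIndex l i) (Set.Icc 1 l) := by
    grind [repEIndex, Set.InjOn]
  exact ((Set.finite_Icc 1 l).injOn_iff_bijOn_of_mapsTo hmaps).mp hinj

theorem repEVec_of_lt (h : m < i) : repEVec l i m = stdVec (2 * l) m := if_pos h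

theorem repEVec_self_of_le (h : m ≤ l) : repEVec l l m = stdVec (2 * l) m := by
  grind [repEVec]

theorem repEFlag_self (l : ℕ) : repEFlag l l = isoFlagOf (2 * l) l (stdVec (2 * l)) :=
  funext fun _ => isoFlagOf_apply_congr fun _ hk => repEVec_self_of_le (by grind)

theorem stdVec_mem_repEFlag_self {k : ℕ} (hk : k ∈ Set.Icc 1 (min m l)) :
    stdVec (2 * l) k ∈ repEFlag l l m :=
  repEFlag_self l ▸ mem_isoFlagOf hk

theorem isIsoFlag_repEFlag (hi : 1 ≤ i) : IsIsoFlag (2 * l) l (repEFlag l i) := by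
  have hsub : Set.Icc 1 l ⊆ Set.Icc 1 (2 * l) := Set.Icc_subset_Icc_right (by omega)
  have hbij := bijOn_repEIndex (l := l) hi
  rw [repEFlag, repEVec_eq_stdVec_repEIndex]
  refine isIsoFlag_isoFlagOf ?_ fun j hj k hk => ?_
  · exact ((linearIndepOn_stdVec _).mono (hbij.image_eq.trans_subset hsub)).comp_of_image
      hbij.injOn
  · have hj' := hbij.mapsTo hj
    have hk' := hbij.mapsTo hk
    rw [← betaBilin_apply, Function.comp_apply, Function.comp_apply,
      betaBilin_stdVec_stdVec (hsub hj') (hsub hk'), if_neg (by grind)]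

theorem repEFlag_apply_of_lt (h : m < i) : repEFlag l i m = repEFlag l l m := by
  rw [repEFlag_self]
  exact isoFlagOf_apply_congr fun k hk => repEVec_of_lt (by grind)

theorem repEFlag_apply_of_le (hi : 1 ≤ i) (h : l ≤ m) : repEFlag l i m = repEFlag l l m := by
  rw [repEFlag_self, repEFlag, repEVec_eq_stdVec_repEIndex, isoFlagOf, isoFlagOf, min_eq_right h,
    Set.image_comp, (bijOn_repEIndex hi).image_eq]

theorem repEFlag_pred_apply_of_ne (hl : 2 ≤ l) (hm : m ≠ l - 1) :
    repEFlag l (l - 1) m = repEFlag l l m := by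
  obtain h | h := Nat.lt_or_ge m (l - 1)
  · exact repEFlag_apply_of_lt h
  · exact repEFlag_apply_of_le (by omega) (by omega)

end StandardFlags

section Orbits

variable {l : ℕ}

/-- The vector `d = e_l - e_{-l}` whose stabilizer in `SO(2l)` is `K`. -/
def kevenVec (l : ℕ) : Fin (2 * l) → ℂ :=
  stdVec (2 * l) l - stdVec (2 * l) (l + 1)

theorem inKEvenOrbit_refl (l : ℕ) (V : ℕ → Submodule ℂ (Fin (2 * l) → ℂ)) : InKEvenOrbit l V V :=
  ⟨LinearEquiv.refl ℂ _, ⟨⟨LinearMap.det_id, fun _ _ => rfl⟩, rfl⟩, funext fun _ => map_id _⟩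

theorem betaBilin_kevenVec_apply_of_mem_Keven {g : (Fin (2 * l) → ℂ) ≃ₗ[ℂ] (Fin (2 * l) → ℂ)}
    (hg : g ∈ Keven l) (x : Fin (2 * l) → ℂ) :
    betaBilin (2 * l) (kevenVec l) (g x) = betaBilin (2 * l) (kevenVec l) x := by
  have hfix : g (kevenVec l) = kevenVec l := hg.2
  conv_lhs => rw [← hfix]
  exact hg.1.2 _ x

theorem betaBilin_kevenVec_stdVec {m : ℕ} (hm : m ∈ Set.Icc 1 l) :
    betaBilin (2 * l) (kevenVec l) (stdVec (2 * l) m) = if m = l then -1 else 0 := by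
  rw [kevenVec, map_sub, LinearMap.sub_apply, betaBilin_stdVec_stdVec, betaBilin_stdVec_stdVec]
    <;> grind

theorem not_inKEvenOrbit_repEFlag_self {i : ℕ} (hi : 1 ≤ i) (hil : i < l) :
    ¬ InKEvenOrbit l (repEFlag l i) (repEFlag l l) := by
  rintro ⟨g, hg, hgF⟩
  have hel : stdVec (2 * l) l ∈ repEFlag l i (l - 1) := by
    have hei : repEVec l i i = stdVec (2 * l) l := by simp [repEVec]
    exact hei ▸ mem_isoFlagOf (by grind)
  have hgel : g (stdVec (2 * l) l) ∈ repEFlag l l (l - 1) := hgF ▸ mem_map_of_mem hel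
  have hker : repEFlag l l (l - 1) ≤ LinearMap.ker (betaBilin (2 * l) (kevenVec l)) := by
    rw [repEFlag_self, isoFlagOf, span_le]
    rintro _ ⟨m, hm, rfl⟩
    exact (betaBilin_kevenVec_stdVec (by grind)).trans (if_neg (by grind))
  have hzero := hker hgel
  rw [LinearMap.mem_ker, betaBilin_kevenVec_apply_of_mem_Keven hg,
    betaBilin_kevenVec_stdVec ⟨by omega, le_rfl⟩] at hzero
  simp at hzero

theorem exists_mem_Keven_stdVec_add_smul {j : ℕ} (hj : 1 ≤ j) (hjl : j < l) (a : ℂ) :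
    ∃ g ∈ Keven l, (∀ m, 1 ≤ m → m < l → g (stdVec (2 * l) m) = stdVec (2 * l) m) ∧
      g (stdVec (2 * l) l) = stdVec (2 * l) l + a • stdVec (2 * l) j := by
  set u := stdVec (2 * l) j
  set w := -a • (stdVec (2 * l) l + stdVec (2 * l) (l + 1))
  have hu {m : ℕ} (hm : m ∈ Set.Icc 1 (l + 1)) : betaBilin (2 * l) u (stdVec (2 * l) m) = 0 := by
    rw [betaBilin_stdVec_stdVec, if_neg] <;> grind
  have hw {m : ℕ} (hm : m ∈ Set.Icc 1 (l + 1)) :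
      betaBilin (2 * l) (stdVec (2 * l) m) w = if l ≤ m then -a else 0 := by
    rw [map_smul, map_add, betaBilin_stdVec_stdVec, betaBilin_stdVec_stdVec] <;> grind [smul_eq_mul]
  have huu : betaBilin (2 * l) u u = 0 := hu (by grind)
  have huw : betaBilin (2 * l) u w = 0 := (hw (by grind)).trans (if_neg (by omega))
  have hww : betaBilin (2 * l) w w = 2 * a ^ 2 :=
    calc betaBilin (2 * l) w w
        = -a * (betaBilin (2 * l) (stdVec (2 * l) l) w +
            betaBilin (2 * l) (stdVec (2 * l) (l + 1)) w) := by
          rw [← smul_eq_mul (-a), ← LinearMap.map_add₂, ← LinearMap.map_smul₂]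
      _ = 2 * a ^ 2 := by
          rw [hw (by grind), hw (by grind), if_pos le_rfl, if_pos (by omega)]
          ring
  set g := eichlerEquiv huu huw (a ^ 2)
  have hg {m : ℕ} (hm : m ∈ Set.Icc 1 (l + 1)) :
      g (stdVec (2 * l) m) = stdVec (2 * l) m + if l ≤ m then a • u else 0 := by
    rw [eichlerEquiv_apply_of_ortho huu huw _ (hu hm), hw hm]
    split_ifs <;> simp
  refine ⟨g, ⟨⟨det_eichlerEquiv huu huw _, ?_⟩, ?_⟩, fun m hm hml => ?_, ?_⟩
  · exact bilin_eichlerEquiv (betaBilin_isSymm _) huu huw hww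
  · rw [map_sub, hg (by grind), hg (by grind), if_pos le_rfl, if_pos (by omega),
      add_sub_add_right_eq_sub]
  · rw [hg (by grind), if_neg (by omega), add_zero]
  · rw [hg (by grind), if_pos le_rfl]

namespace IsIsoFlag

variable {V : ℕ → Submodule ℂ (Fin (2 * l) → ℂ)}

theorem stdVec_pred_mem_or_exists_add_smul_mem (hV : IsIsoFlag (2 * l) l V) (hl : 2 ≤ l)
    (hVm : ∀ m, m ≠ l - 1 → V m = repEFlag l l m) :
    stdVec (2 * l) (l - 1) ∈ V (l - 1) ∨
      ∃ a : ℂ, stdVec (2 * l) l + a • stdVec (2 * l) (l - 1) ∈ V (l - 1) := by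
  obtain ⟨k, rfl⟩ := Nat.exists_eq_add_of_le' hl
  have hlt : V k < V (k + 1) := hV.strictMonoOn (by grind) (by grind) (by omega)
  refine mem_or_exists_add_smul_mem hlt ?_
  calc V (k + 1) ≤ V (k + 2) := hV.monotone (by omega)
    _ = V k ⊔ span ℂ {stdVec _ (k + 1), stdVec _ (k + 2)} := by
      rw [hVm _ (by omega), hVm k (by omega), repEFlag_self, isoFlagOf_add_two le_rfl]

theorem eq_repEFlag_self_of_stdVec_pred_mem (hV : IsIsoFlag (2 * l) l V) (hl : 1 ≤ l)
    (hVm : ∀ m, m ≠ l - 1 → V m = repEFlag l l m) (hmem : stdVec (2 * l) (l - 1) ∈ V (l - 1)) :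
    V = repEFlag l l := by
  have hF : IsIsoFlag (2 * l) l (repEFlag l l) := isIsoFlag_repEFlag hl
  rw [repEFlag_self] at hF ⊢
  refine (hV.isoFlagOf_eq hF fun m hm => ?_).symm
  obtain rfl | hne := eq_or_ne m (l - 1)
  · exact hmem
  · exact hVm m hne ▸ stdVec_mem_repEFlag_self (by grind)

theorem inKEvenOrbit_of_stdVec_add_smul_mem (hV : IsIsoFlag (2 * l) l V) (hl : 2 ≤ l)
    (hVm : ∀ m, m ≠ l - 1 → V m = repEFlag l l m) {a : ℂ}
    (hmem : stdVec (2 * l) l + a • stdVec (2 * l) (l - 1) ∈ V (l - 1)) :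
    InKEvenOrbit l (repEFlag l (l - 1)) V := by
  have hl' : 1 ≤ l - 1 := by omega
  obtain ⟨g, hg, hfix, hgel⟩ := exists_mem_Keven_stdVec_add_smul hl' (show l - 1 < l by omega) a
  have hgF := (isIsoFlag_repEFlag (l := l) hl').actFlag hg.1.2
  refine ⟨g, hg, ?_⟩
  rw [repEFlag, actFlag_isoFlagOf] at hgF ⊢
  refine hV.isoFlagOf_eq hgF fun m hm => ?_
  rw [Function.comp_apply]
  obtain hlt | rfl | hgt := lt_trichotomy m (l - 1)
  · rw [repEVec_of_lt hlt, hfix m (by grind) (by grind), hVm m hlt.ne]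
    exact stdVec_mem_repEFlag_self (by grind)
  · have hvec : repEVec l (l - 1) (l - 1) = stdVec (2 * l) l := by simp [repEVec]
    rwa [hvec, hgel]
  · have hvec : repEVec l (l - 1) m = stdVec (2 * l) (l - 1) := by grind [repEVec]
    rw [hvec, hfix _ (by omega) (by omega), hVm m hgt.ne']
    exact stdVec_mem_repEFlag_self (by grind)

end IsIsoFlag

end Orbits

/-- If a maximal isotropic flag in `ℂ^{2l}` agrees with the standard flag
`F_l = repEFlag l l` in every degree `m ≠ l-1`, then either it equals `F_l` or it lies
in the `K`-orbit of `F_{l-1} = repEFlag l (l-1)`, and not both; moreover both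
possibilities occur (the root `α_{l-1}` is complex stable for `Q_+` and
`m(s_{α_{l-1}}) * Q_+ = Q_{l-1}`). -/
theorem stmt_17 (l : ℕ) (hl : 2 ≤ l) :
    (∀ V : ℕ → Submodule ℂ (Fin (2 * l) → ℂ), IsIsoFlag (2 * l) l V →
      (∀ m, m ≠ l - 1 → V m = repEFlag l l m) →
      (V = repEFlag l l ∧ ¬ InKEvenOrbit l (repEFlag l (l - 1)) V) ∨
        (V ≠ repEFlag l l ∧ InKEvenOrbit l (repEFlag l (l - 1)) V)) ∧
    (∃ V, IsIsoFlag (2 * l) l V ∧ (∀ m, m ≠ l - 1 → V m = repEFlag l l m) ∧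
      V = repEFlag l l) ∧
    (∃ V, IsIsoFlag (2 * l) l V ∧ (∀ m, m ≠ l - 1 → V m = repEFlag l l m) ∧
      InKEvenOrbit l (repEFlag l (l - 1)) V) := by
  have hiso (i : ℕ) (hi : 1 ≤ i) := isIsoFlag_repEFlag (l := l) hi
  have hagree (m : ℕ) (hm : m ≠ l - 1) : repEFlag l (l - 1) m = repEFlag l l m :=
    repEFlag_pred_apply_of_ne hl hm
  have hdisjoint : ¬ InKEvenOrbit l (repEFlag l (l - 1)) (repEFlag l l) :=
    not_inKEvenOrbit_repEFlag_self (by omega) (by omega)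
  refine ⟨fun V hV hVm => ?_, ⟨_, hiso l (by omega), fun _ _ => rfl, rfl⟩,
    ⟨_, hiso (l - 1) (by omega), hagree, inKEvenOrbit_refl l _⟩⟩
  by_cases hVF : V = repEFlag l l
  · exact Or.inl ⟨hVF, hVF ▸ hdisjoint⟩
  · refine Or.inr ⟨hVF, ?_⟩
    obtain hmem | ⟨a, hmem⟩ := hV.stdVec_pred_mem_or_exists_add_smul_mem hl hVm
    · exact absurd (hV.eq_repEFlag_self_of_stdVec_pred_mem (by omega) hVm hmem) hVF
    · exact hV.inKEvenOrbit_of_stdVec_add_smul_mem hl hVm hmem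
end
end
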